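/- arXiv:1104.3046 — 2 statements merged into one kernel-verified Lean document; each statement's English description precedes it below -/
import Mathlib

section
/- Let G be a simple graph on n vertices whose algebraic connectivity (second smallest Laplacian eigenvalue) λ₁ satisfies λ₁ ≥ σn for some σ > 0. Then there is a constant c_∞ > 0 depending only on σ such that ‖Q̂^{-1}‖_∞ ≤ c_∞/n, where Q̂ = Q + J and J is the all-ones matrix. -/
open Matrix

lemma coer (σ : ℝ) (n : ℕ) (hn : 0 < n) (G : SimpleGraph (Fin n)) (_ : DecidableRel G.Adj)
    (h : ∀ x : Fin n → ℝ, (∑ i, x i) = 0 →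
          σ * n * (x ⬝ᵥ x) ≤ x ⬝ᵥ (G.lapMatrix ℝ).mulVec x) (x : Fin n → ℝ) :
    min σ 1 * n * (x ⬝ᵥ x) ≤
      x ⬝ᵥ (G.lapMatrix ℝ + (Matrix.of fun _ _ => (1 : ℝ) : Matrix (Fin n) (Fin n) ℝ)).mulVec x := by
  have hn' : (0:ℝ) < n := by exact_mod_cast hn
  obtain ⟨m, hm⟩ : ∃ m : ℝ, m = (∑ i, x i) / n := ⟨_, rfl⟩
  have hS : ∑ i, x i = n * m := by rw [hm]; field_simp
  obtain ⟨y, hy⟩ : ∃ y : Fin n → ℝ, y = fun i => x i - m := ⟨_, rfl⟩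
  have hy0 : ∑ i, y i = 0 := by
    simp [hy, Finset.sum_sub_distrib, hS]
  have hxy : x = y + m • (fun _ => (1:ℝ)) := by
    ext i; simp [hy]
  have hQ1 : (G.lapMatrix ℝ).mulVec (fun _ => (1:ℝ)) = 0 :=
    G.lapMatrix_mulVec_const_eq_zero
  have h1Q : (fun _ => (1:ℝ)) ⬝ᵥ (G.lapMatrix ℝ).mulVec y = 0 := by
    rw [Matrix.dotProduct_mulVec, ← Matrix.mulVec_transpose, (G.isSymm_lapMatrix (R := ℝ)).eq, hQ1]
    simp
  have hQ : x ⬝ᵥ (G.lapMatrix ℝ).mulVec x = y ⬝ᵥ (G.lapMatrix ℝ).mulVec y := by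
    rw [hxy, Matrix.mulVec_add, Matrix.mulVec_smul, hQ1, smul_zero, add_zero, add_dotProduct,
      smul_dotProduct, h1Q]
    simp
  have hJ : x ⬝ᵥ (Matrix.of fun _ _ => (1 : ℝ) : Matrix (Fin n) (Fin n) ℝ).mulVec x
      = n * (n * m ^ 2) := by
    have : (Matrix.of fun _ _ => (1 : ℝ) : Matrix (Fin n) (Fin n) ℝ).mulVec x
        = fun _ => n * m := by
      ext i; simp [Matrix.mulVec, dotProduct, hS]
    rw [this]
    simp only [dotProduct, ← Finset.sum_mul, hS]; ring
  have hxx : x ⬝ᵥ x = y ⬝ᵥ y + n * m ^ 2 := by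
    have h2 : ∀ i, x i * x i = y i * y i + (2 * m * y i + m ^ 2) := by
      intro i; simp [hy]; ring
    simp only [dotProduct]
    simp_rw [h2, Finset.sum_add_distrib, ← Finset.mul_sum, hy0]
    simp
  have hyy : 0 ≤ y ⬝ᵥ y := Finset.sum_nonneg fun i _ => mul_self_nonneg _
  rw [Matrix.add_mulVec, dotProduct_add, hQ, hJ, hxx]
  have a1 : min σ 1 * (n * (y ⬝ᵥ y)) ≤ σ * (n * (y ⬝ᵥ y)) :=
    mul_le_mul_of_nonneg_right (min_le_left _ _) (by positivity)
  have a2 : min σ 1 * (n * (n * m ^ 2)) ≤ 1 * (n * (n * m ^ 2)) :=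
    mul_le_mul_of_nonneg_right (min_le_right _ _) (by positivity)
  linarith [h y hy0]

/-- If the algebraic connectivity of a simple graph `G` on `n` vertices satisfies
`λ₁ ≥ σ n` (expressed via the quadratic form of the Laplacian on the orthogonal
complement of the all-ones vector), then `‖(Q+J)⁻¹‖_∞ ≤ c_∞ / n` for a constant
`c_∞ > 0` depending only on `σ`. -/
theorem stmt_2 (σ : ℝ) (hσ : 0 < σ) :
    ∃ c : ℝ, 0 < c ∧
      ∀ (n : ℕ) (G : SimpleGraph (Fin n)) (_ : DecidableRel G.Adj),
        (∀ x : Fin n → ℝ, (∑ i, x i) = 0 →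
          σ * n * (x ⬝ᵥ x) ≤ x ⬝ᵥ (G.lapMatrix ℝ).mulVec x) →
        ∀ j, ∑ k, |(G.lapMatrix ℝ + (Matrix.of fun _ _ => (1 : ℝ) : Matrix (Fin n) (Fin n) ℝ))⁻¹ j k| ≤ c / n := by
  have hs : 0 < min σ 1 := lt_min hσ one_pos
  refine ⟨(1 + 1 / min σ 1) / min σ 1, by positivity, ?_⟩
  intro n G inst h j
  have hn : 0 < n := j.pos
  have hn' : (0:ℝ) < n := by exact_mod_cast hn
  have hc := coer σ n hn G inst h
  have hoff : ∀ k, k ≠ j → |(G.lapMatrix ℝ + (Matrix.of fun _ _ => (1 : ℝ) : Matrix (Fin n) (Fin n) ℝ)) j k| ≤ 1 := by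
    intro k hk
    by_cases hA : G.Adj j k <;>
    simp [SimpleGraph.lapMatrix, SimpleGraph.degMatrix, Matrix.diagonal_apply, hk.symm,
      SimpleGraph.adjMatrix_apply, hA]
  generalize (G.lapMatrix ℝ + (Matrix.of fun _ _ => (1 : ℝ) : Matrix (Fin n) (Fin n) ℝ)) = M at *
  generalize min σ 1 = s at *
  have hdiag : s * n ≤ M j j := by
    have := hc (Pi.single j 1)
    simpa using this
  have hu : IsUnit M := by
    rw [← Matrix.mulVec_injective_iff_isUnit]
    intro a b hab
    have h0 : M.mulVec (a - b) = 0 := by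
      rw [Matrix.mulVec_sub]; exact sub_eq_zero.2 hab
    have h1 := hc (a - b)
    rw [h0, dotProduct_zero] at h1
    have h3 : 0 ≤ (a-b) ⬝ᵥ (a-b) := Finset.sum_nonneg fun i _ => mul_self_nonneg _
    have h2 : (a - b) ⬝ᵥ (a - b) = 0 := by
      by_contra hne
      have : 0 < (a-b) ⬝ᵥ (a-b) := lt_of_le_of_ne h3 (Ne.symm hne)
      have : 0 < s * n * ((a-b) ⬝ᵥ (a-b)) := by positivity
      linarith
    exact sub_eq_zero.1 (dotProduct_self_eq_zero.1 h2)
  obtain ⟨f, hf⟩ : ∃ f : Fin n → ℝ, f = fun k => if 0 ≤ M⁻¹ j k then 1 else -1 := ⟨_, rfl⟩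
  have hf1 : ∀ k, |f k| ≤ 1 := by
    intro k; rw [hf]; dsimp only; split_ifs <;> simp
  obtain ⟨x, hx⟩ : ∃ x, x = M⁻¹.mulVec f := ⟨_, rfl⟩
  have hMx : M.mulVec x = f := by
    rw [hx, Matrix.mulVec_mulVec, Matrix.mul_nonsing_inv _ ((Matrix.isUnit_iff_isUnit_det _).1 hu),
      Matrix.one_mulVec]
  have hxj : ∑ k, |M⁻¹ j k| = x j := by
    rw [hx]
    simp only [Matrix.mulVec, dotProduct]
    refine Finset.sum_congr rfl fun k _ => ?_
    rw [hf]; dsimp only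
    split_ifs with h0
    · rw [abs_of_nonneg h0, mul_one]
    · rw [abs_of_neg (not_le.1 h0)]; ring
  have hxj0 : 0 ≤ x j := by rw [← hxj]; positivity
  rw [hxj]
  obtain ⟨S, hS⟩ : ∃ S, S = ∑ i, |x i| := ⟨_, rfl⟩
  have hS0 : 0 ≤ S := by rw [hS]; positivity
  have h1 : s * n * (x ⬝ᵥ x) ≤ S := by
    refine (hc x).trans ?_
    rw [hMx, hS]
    refine Finset.sum_le_sum fun i _ => ?_
    calc x i * f i ≤ |x i * f i| := le_abs_self _
      _ = |x i| * |f i| := abs_mul _ _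
      _ ≤ |x i| := mul_le_of_le_one_right (abs_nonneg _) (hf1 i)
  have h2 : S ^ 2 ≤ n * (x ⬝ᵥ x) := by
    have := sq_sum_le_card_mul_sum_sq (s := Finset.univ) (f := fun i => |x i|)
    simp only [Finset.card_univ, Fintype.card_fin, sq_abs] at this
    rw [hS]
    simpa [dotProduct, sq] using this
  have h3 : S ≤ 1 / s := by
    rw [le_div_iff₀ hs]
    by_contra hlt
    push Not at hlt
    have hSp : 0 < S := by
      rcases hS0.lt_or_eq with h | h
      · exact h
      · rw [← h] at hlt; linarith
    nlinarith
  have h4 : M j j * x j ≤ 1 + S := by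
    have e : ∑ k, M j k * x k = f j := congrFun hMx j
    rw [← Finset.add_sum_erase _ _ (Finset.mem_univ j)] at e
    have b : |∑ k ∈ Finset.univ.erase j, M j k * x k| ≤ S := by
      refine (Finset.abs_sum_le_sum_abs _ _).trans ?_
      rw [hS]
      refine (Finset.sum_le_sum fun k hk => ?_).trans
        (Finset.sum_le_sum_of_subset_of_nonneg (Finset.subset_univ (Finset.univ.erase j))
          fun i _ _ => abs_nonneg (x i))
      rw [abs_mul]
      exact mul_le_of_le_one_left (abs_nonneg _) (hoff k (Finset.ne_of_mem_erase hk))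
    have := (abs_le.1 b).1
    have := (abs_le.1 (hf1 j)).2
    linarith
  rw [div_div, le_div_iff₀ (by positivity)]
  have := mul_le_mul_of_nonneg_right hdiag hxj0
  linarith
end

section
/- Let w_{jk} (1 ≤ j, k ≤ n, j ≠ k) be arbitrary scalars, and define the n×n matrix A by A_{jk} = -w_{jk} for j ≠ k and A_{jj} = Σ_{r≠j} w_{jr}. For any r with 1 ≤ r ≤ n, let M_r be the principal minor of A obtained by deleting row r and column r. Then det M_r = Σ_T Π_{(v_j,v_k) ∈ ET} w_{jk}, where the sum is over all directed spanning trees T on vertices {v₁,...,v_n} rooted at v_r (each non-root vertex has exactly one out-edge, oriented toward the root). -/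
open scoped Classical

theorem aux_det_one {n : ℕ} {R : Type*} [CommRing R] (r : Fin (n + 1))
    (f : Fin (n + 1) → Fin (n + 1)) (hr : ∀ v, ∃ k : ℕ, f^[k] v = r) :
    (Matrix.of fun i k : Fin n => (if i = k then (1:R) else 0)
      - (if f (r.succAbove i) = r.succAbove k then 1 else 0)).det = 1 := by
  have hd : ∀ v, v ≠ r → Nat.find (hr (f v)) < Nat.find (hr v) := by
    intro v hv
    have h := Nat.find_spec (hr v)
    rcases hk : Nat.find (hr v) with _ | k
    · rw [hk] at h
      exact absurd h hv
    · rw [hk, Function.iterate_succ_apply] at h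
      exact Nat.lt_succ_of_le (Nat.find_min' _ h)
  let b : Fin n → ℕᵒᵈ := fun i => OrderDual.toDual (Nat.find (hr (r.succAbove i)))
  have hne : ∀ i k, ¬ (b i < b k) → f (r.succAbove i) ≠ r.succAbove k := by
    intro i k hik h
    apply hik
    have := hd (r.succAbove i) (Fin.succAbove_ne r i)
    simp only [h] at this
    exact OrderDual.toDual_lt_toDual.2 this
  rw [Matrix.BlockTriangular.det (b := b)]
  · apply Finset.prod_eq_one
    intro a _
    refine Eq.trans (congrArg Matrix.det ?_) Matrix.det_one
    ext ⟨i, hi⟩ ⟨k, hk⟩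
    have := hne i k (by rw [hi, hk]; exact lt_irrefl _)
    simp [Matrix.toSquareBlock_def, Matrix.one_apply, this]
  · intro i k hik
    have := hne i k (lt_asymm hik)
    have h2 : i ≠ k := by rintro rfl; exact lt_irrefl _ hik
    simp [this, h2]

theorem aux_det_zero {n : ℕ} {R : Type*} [CommRing R] (r : Fin (n + 1))
    (f : Fin (n + 1) → Fin (n + 1)) (hfr : f r = r) (hr : ¬ ∀ v, ∃ k : ℕ, f^[k] v = r) :
    (Matrix.of fun i k : Fin n => (if i = k then (1:R) else 0)
      - (if f (r.succAbove i) = r.succAbove k then 1 else 0)).det = 0 := by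
  set M := (Matrix.of fun i k : Fin n => (if i = k then (1:R) else 0)
      - (if f (r.succAbove i) = r.succAbove k then 1 else 0)) with hM
  let S : Fin (n + 1) → R := fun v => if ∃ k : ℕ, f^[k] v = r then 0 else 1
  have hSr : S r = 0 := if_pos ⟨0, rfl⟩
  have hSf : ∀ v, S (f v) = S v := by
    intro v
    have : (∃ k : ℕ, f^[k] (f v) = r) ↔ ∃ k : ℕ, f^[k] v = r := by
      constructor
      · rintro ⟨k, hk⟩
        exact ⟨k + 1, hk⟩
      · rintro ⟨k, hk⟩
        refine ⟨k, ?_⟩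
        rw [← Function.iterate_succ_apply, Function.iterate_succ_apply', hk, hfr]
    simp only [S, this]
  have hMv : M.mulVec (fun k => S (r.succAbove k)) = 0 := by
    ext i
    have h1 : ∑ k, (if f (r.succAbove i) = r.succAbove k then S (r.succAbove k) else 0)
        = S (f (r.succAbove i)) := by
      have := Fin.sum_univ_succAbove
        (fun l => if f (r.succAbove i) = l then S l else 0) r
      rw [Finset.sum_ite_eq] at this
      simp only [Finset.mem_univ, if_true, hSr, ite_self, zero_add] at this
      exact this.symm
    simp [hM, Matrix.mulVec, dotProduct, sub_mul, Finset.sum_sub_distrib, h1, hSf]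
  push Not at hr
  obtain ⟨v, hv⟩ := hr
  have hSv : S v = 1 := if_neg (by push Not; exact hv)
  obtain ⟨i, rfl⟩ := Fin.exists_succAbove_eq (x := v) (y := r) (by rintro rfl; exact hv 0 rfl)
  have h := congrArg (M.adjugate.mulVec) hMv
  rw [Matrix.mulVec_mulVec, Matrix.adjugate_mul, Matrix.mulVec_zero, Matrix.smul_mulVec,
    Matrix.one_mulVec] at h
  have := congrFun h i
  simpa [hSv] using this

/-- Tutte's directed matrix-tree theorem: with `A_{jk} = -w_{jk}` for `j ≠ k`
and `A_{jj} = ∑_{l ≠ j} w_{jl}`, the principal minor of `A` obtained by deleting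
row and column `r` has determinant `∑_T ∏_{(v_j,v_k) ∈ ET} w_{jk}`, the sum being
over all directed spanning trees rooted at `r` (encoded as maps `f` sending each
non-root vertex to the head of its unique out-edge, every vertex eventually
reaching the root under iteration). -/
theorem stmt_19 (n : ℕ) (R : Type*) [CommRing R]
    (w : Fin (n + 1) → Fin (n + 1) → R) (r : Fin (n + 1)) :
    ((Matrix.of fun j k : Fin (n + 1) =>
        if j = k then ∑ l ∈ Finset.univ.erase j, w j l else -w j k).submatrix
        r.succAbove r.succAbove).det =
      ∑ f ∈ Finset.univ.filter
          (fun f : Fin (n + 1) → Fin (n + 1) =>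
            f r = r ∧ ∀ v, ∃ k : ℕ, f^[k] v = r),
        ∏ v ∈ Finset.univ.erase r, w v (f v) := by
  have hrow : ((Matrix.of fun j k : Fin (n + 1) =>
        if j = k then ∑ l ∈ Finset.univ.erase j, w j l else -w j k).submatrix
        r.succAbove r.succAbove) = fun i => ∑ l, w (r.succAbove i) l •
          (fun k : Fin n => (if i = k then (1:R) else 0)
            - (if l = r.succAbove k then 1 else 0)) := by
    ext i k
    simp only [Matrix.submatrix_apply, Matrix.of_apply, Finset.sum_apply, Pi.smul_apply,
      smul_eq_mul, mul_sub, Finset.sum_sub_distrib, mul_ite, mul_one, mul_zero,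
      Finset.sum_ite_eq', Finset.mem_univ, if_true, Fin.succAbove_right_inj]
    by_cases h : i = k
    · subst h
      simp only [if_true]
      rw [← Finset.add_sum_erase _ _ (Finset.mem_univ (r.succAbove i))]
      ring
    · simp [h]
  have hexp : (Matrix.det (fun i => ∑ l, w (r.succAbove i) l •
          (fun k : Fin n => (if i = k then (1:R) else 0)
            - (if l = r.succAbove k then 1 else 0)))) =
      ∑ g : Fin n → Fin (n + 1), (∏ i, w (r.succAbove i) (g i)) *
        (Matrix.of fun i k : Fin n => (if i = k then (1:R) else 0)
          - (if g i = r.succAbove k then 1 else 0)).det := by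
    have h := (Matrix.detRowAlternating (R := R) (n := Fin n)).toMultilinearMap.map_sum
      (fun i (l : Fin (n + 1)) => w (r.succAbove i) l •
          (fun k : Fin n => (if i = k then (1:R) else 0)
            - (if l = r.succAbove k then 1 else 0)))
    refine h.trans (Finset.sum_congr rfl fun g _ => ?_)
    rw [MultilinearMap.map_smul_univ]
    rfl
  rw [hrow, hexp]
  have hprod : ∀ f : Fin (n + 1) → Fin (n + 1), ∏ v ∈ Finset.univ.erase r, w v (f v)
      = ∏ i, w (r.succAbove i) (f (r.succAbove i)) := by
    intro f
    have : Finset.univ.erase r = Finset.univ.image r.succAbove := by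
      rw [Fin.image_succAbove_univ]; ext; simp
    rw [this, Finset.prod_image (fun a _ b _ h => Fin.succAbove_right_injective h)]
  symm
  refine Finset.sum_of_injOn (fun f i => f (r.succAbove i)) ?_ ?_ ?_ ?_
  · intro f hf g hg h
    simp only [Finset.coe_filter, Finset.mem_univ, true_and, Set.mem_ofPred_eq] at hf hg
    ext1 v
    rcases eq_or_ne v r with rfl | hv
    · rw [hf.1, hg.1]
    · obtain ⟨i, rfl⟩ := Fin.exists_succAbove_eq hv
      exact congrFun h i
  · intro f _
    simp
  · intro g _ hg
    let f : Fin (n + 1) → Fin (n + 1) := r.insertNth (α := fun _ => Fin (n + 1)) r g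
    have hf1 : f r = r := by simp [f]
    have hf2 : ∀ i, f (r.succAbove i) = g i := by simp [f]
    have h0 := aux_det_zero (R := R) r f hf1 (by
      intro h
      apply hg
      refine ⟨f, by simpa using ⟨hf1, h⟩, ?_⟩
      ext1 i
      exact hf2 i)
    simp only [hf2] at h0
    rw [h0, mul_zero]
  · intro f hf
    simp only [Finset.mem_filter, Finset.mem_univ, true_and] at hf
    rw [aux_det_one r f hf.2, mul_one, hprod]
end
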